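/- arXiv:2506.12171 — 2 statements merged into one kernel-verified Lean document; each statement's English description precedes it below -/
import Mathlib

section
/- The gradient map ∇F : ℝ^d → ℝ^d, given explicitly by ∇F(α) = (Σ_{j=1}^D exp(⟨e_j, α⟩) e_j) / (Σ_{k=1}^D exp(⟨e_k, α⟩)), is injective and its range is exactly the interior of the Newton polytope N; that is, ∇F is a bijection from ℝ^d onto the interior of N. -/
/-!
Replacing `α` by a continuous linear functional, `∇F(α)` is the barycentre of the `e_j` for the
softmax weights `w_j ∝ exp (α (e_j))`, so everything happens for a finite family `e` in a normed
space.

* Injectivity: `log w_j` and `α (e_j)` differ by a constant, so if `α` and `β` have the same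
  barycentre, then the symmetrised Kullback–Leibler divergence `∑ (w_j - v_j) (log w_j - log v_j)`
  of their weights `w` and `v` vanishes. Hence the weights agree, `α - β` is constant on the
  affinely spanning family `e`, and `α = β`.
* The weights are positive, so a functional supporting the Newton polytope at the barycentre would
  be constant on `e`; the barycentre is therefore an interior point.
* Conversely, for `y` in the interior of the polytope, `α ↦ F(α) - α(y)` grows at least linearly
  in `‖α‖`, so it attains its minimum, and at a minimum `∇F(α) = y`.
-/

/-- The gradient of the free energy,
`∇F(α) = (Σ_j exp(⟨e_j, α⟩) e_j) / (Σ_k exp(⟨e_k, α⟩))`. -/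
noncomputable def gradFreeEnergy (d D : ℕ) (e : Fin D → (Fin d → ℝ)) (α : Fin d → ℝ) :
    Fin d → ℝ :=
  (∑ k, Real.exp (∑ i, e k i * α i))⁻¹ • ∑ j, Real.exp (∑ i, e j i * α i) • e j

open Set

section AffineSpan

variable {ι k V W : Type*} [AddCommGroup V] [AddCommGroup W]

theorem linearMap_eq_zero_of_eq_const_of_affineSpan_eq_top [Ring k] [Module k V] [Module k W]
    {s : Set V} (hs : affineSpan k s = ⊤) {f : V →ₗ[k] W} {c : W} (hf : ∀ x ∈ s, f x = c) :
    f = 0 := by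
  have hconst : f.toAffineMap = AffineMap.const k V c := AffineMap.ext_on hs hf
  have hfc (x : V) : f x = c := DFunLike.congr_fun hconst x
  ext x
  rw [hfc x, ← hfc 0, map_zero, LinearMap.zero_apply]

theorem affineSpan_range_eq_top_of_sum_eq_zero [Fintype ι] [Nonempty ι] [DivisionRing k]
    [CharZero k] [Module k V] {e : ι → V} (hspan : Submodule.span k (range e) = ⊤)
    (hsum : ∑ j, e j = 0) : affineSpan k (range e) = ⊤ := by
  have hcentroid : Finset.univ.centroid k e = 0 := by
    rw [Finset.centroid_def, Finset.affineCombination_eq_linear_combination _ _ _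
      (Finset.sum_centroidWeights_eq_one_of_nonempty k _ Finset.univ_nonempty)]
    simp only [Finset.centroidWeights_apply, ← Finset.smul_sum, hsum, smul_zero]
  have hzero : (0 : V) ∈ affineSpan k (range e) :=
    hcentroid ▸ centroid_mem_affineSpan_of_nonempty k e Finset.univ_nonempty
  rw [← affineSpan_insert_eq_affineSpan k hzero, ← SetLike.coe_set_eq, affineSpan_insert_zero,
    hspan, Submodule.top_coe, AffineSubspace.top_coe]

theorem finiteDimensional_of_affineSpan_range_eq_top [Finite ι] [DivisionRing k] [Module k V]
    {e : ι → V} (he : affineSpan k (range e) = ⊤) : FiniteDimensional k V := by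
  have hdir : FiniteDimensional k (affineSpan k (range e)).direction := inferInstance
  rw [he, AffineSubspace.direction_top] at hdir
  exact Submodule.topEquiv.finiteDimensional

end AffineSpan

theorem sum_smul_mem_interior_convexHull {ι E : Type*} [Fintype ι] [NormedAddCommGroup E]
    [NormedSpace ℝ E] {e : ι → E} (he : affineSpan ℝ (range e) = ⊤) {w : ι → ℝ}
    (hw : ∀ j, 0 < w j) (hw_sum : ∑ j, w j = 1) :
    ∑ j, w j • e j ∈ interior (convexHull ℝ (range e)) := by
  have : FiniteDimensional ℝ E := finiteDimensional_of_affineSpan_range_eq_top he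
  by_contra hx
  obtain ⟨f, u, hf_ne, hf_le, hu_le⟩ := geometric_hahn_banach_of_nonempty_interior
    (convex_convexHull ℝ (range e)) (convex_singleton (∑ j, w j • e j))
    (disjoint_singleton_right.mpr hx) (interior_convexHull_nonempty_iff_affineSpan_eq_top.mpr he)
    (singleton_nonempty _)
  have hle (j : ι) : f (e j) ≤ u := hf_le _ (subset_convexHull ℝ _ (mem_range_self j))
  have hsum_nonpos : ∑ j, w j * (u - f (e j)) ≤ 0 := by
    have hu : u ≤ ∑ j, w j * f (e j) := by simpa using hu_le _ rfl
    simpa only [mul_sub, Finset.sum_sub_distrib, ← Finset.sum_mul, hw_sum, one_mul, sub_nonpos]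
  have hterm_nonneg (j : ι) : 0 ≤ w j * (u - f (e j)) :=
    mul_nonneg (hw j).le (sub_nonneg.mpr (hle j))
  have hconst (j : ι) : f (e j) = u := by
    have hterm := (Finset.sum_eq_zero_iff_of_nonneg fun j _ ↦ hterm_nonneg j).mp
      (hsum_nonpos.antisymm (Finset.sum_nonneg fun j _ ↦ hterm_nonneg j)) j (Finset.mem_univ j)
    linarith [(mul_eq_zero_iff_left (hw j).ne').mp hterm]
  exact hf_ne (ContinuousLinearMap.coe_injective
    (linearMap_eq_zero_of_eq_const_of_affineSpan_eq_top he (forall_mem_range.mpr hconst)))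

theorem sub_mul_log_sub_log_pos {x y : ℝ} (hx : 0 < x) (hy : 0 < y) (hxy : x ≠ y) :
    0 < (x - y) * (Real.log x - Real.log y) := by
  rcases hxy.lt_or_gt with h | h
  · exact mul_pos_of_neg_of_neg (sub_neg.mpr h) (sub_neg.mpr (Real.log_lt_log hx h))
  · exact mul_pos (sub_pos.mpr h) (sub_pos.mpr (Real.log_lt_log hy h))

section Softmax

variable {ι : Type*} [Fintype ι]

/-- The function `log (∑ exp (a j))`, whose gradient is `softmax`. -/
noncomputable def logSumExp (a : ι → ℝ) : ℝ := Real.log (∑ j, Real.exp (a j))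

/-- The Gibbs probability weights proportional to `exp (a j)`. -/
noncomputable def softmax (a : ι → ℝ) (j : ι) : ℝ := Real.exp (a j) / ∑ k, Real.exp (a k)

theorem sum_exp_pos [Nonempty ι] (a : ι → ℝ) : 0 < ∑ j, Real.exp (a j) :=
  Finset.sum_pos (fun _ _ ↦ Real.exp_pos _) Finset.univ_nonempty

theorem softmax_pos (a : ι → ℝ) (j : ι) : 0 < softmax a j :=
  have : Nonempty ι := ⟨j⟩
  div_pos (Real.exp_pos _) (sum_exp_pos a)

theorem sum_softmax [Nonempty ι] (a : ι → ℝ) : ∑ j, softmax a j = 1 := by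
  simp only [softmax, ← Finset.sum_div, div_self (sum_exp_pos a).ne']

theorem log_softmax (a : ι → ℝ) (j : ι) : Real.log (softmax a j) = a j - logSumExp a := by
  have : Nonempty ι := ⟨j⟩
  rw [softmax, Real.log_div (Real.exp_ne_zero _) (sum_exp_pos a).ne', Real.log_exp, logSumExp]

theorem le_logSumExp (a : ι → ℝ) (j : ι) : a j ≤ logSumExp a := by
  have : Nonempty ι := ⟨j⟩
  rw [logSumExp, Real.le_log_iff_exp_le (sum_exp_pos a)]
  exact Finset.single_le_sum (f := fun k ↦ Real.exp (a k)) (fun _ _ ↦ (Real.exp_pos _).le)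
    (Finset.mem_univ j)

theorem sum_softmax_sub_mul_log_sub_log (a b : ι → ℝ) :
    ∑ j, (softmax a j - softmax b j) * (Real.log (softmax a j) - Real.log (softmax b j)) =
      ∑ j, (softmax a j - softmax b j) * (a j - b j) := by
  cases isEmpty_or_nonempty ι
  · simp
  have hconst : ∑ j, (softmax a j - softmax b j) * (logSumExp a - logSumExp b) = 0 := by
    rw [← Finset.sum_mul, Finset.sum_sub_distrib, sum_softmax, sum_softmax, sub_self, zero_mul]
  rw [← sub_eq_zero, ← Finset.sum_sub_distrib, ← neg_eq_zero, ← Finset.sum_neg_distrib, ← hconst]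
  refine Finset.sum_congr rfl fun j _ ↦ ?_
  rw [log_softmax, log_softmax]
  ring

theorem softmax_eq_of_sum_sub_mul_sub_eq_zero {a b : ι → ℝ}
    (h : ∑ j, (softmax a j - softmax b j) * (a j - b j) = 0) : softmax a = softmax b := by
  by_contra hne
  obtain ⟨i, hi⟩ := Function.ne_iff.mp hne
  rw [← sum_softmax_sub_mul_log_sub_log] at h
  refine h.not_gt (Finset.sum_pos' (fun j _ ↦ ?_) ⟨i, Finset.mem_univ i,
    sub_mul_log_sub_log_pos (softmax_pos a i) (softmax_pos b i) hi⟩)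
  rcases eq_or_ne (softmax a j) (softmax b j) with hj | hj
  · simp [hj]
  · exact (sub_mul_log_sub_log_pos (softmax_pos a j) (softmax_pos b j) hj).le

theorem sub_eq_logSumExp_sub_of_softmax_eq {a b : ι → ℝ} (h : softmax a = softmax b) (j : ι) :
    a j - b j = logSumExp a - logSumExp b := by
  have hlog : a j - logSumExp a = b j - logSumExp b := by
    rw [← log_softmax, ← log_softmax, h]
  linarith

end Softmax

section GibbsMean

variable {ι E : Type*} [Fintype ι] [NormedAddCommGroup E] [NormedSpace ℝ E] {e : ι → E}

/-- The free energy `F(α) = log (∑ exp (α (e j)))` of a finite family `e`, as a function on the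
dual space. -/
noncomputable def freeEnergy (e : ι → E) (α : StrongDual ℝ E) : ℝ := logSumExp fun j ↦ α (e j)

/-- The barycentre of a finite family `e` for the Gibbs weights proportional to `exp (α (e j))`:
the gradient of `freeEnergy e` at `α`, as an element of `E` rather than of its double dual. -/
noncomputable def gibbsMean (e : ι → E) (α : StrongDual ℝ E) : E :=
  ∑ j, softmax (fun k ↦ α (e k)) j • e j

theorem apply_gibbsMean (α β : StrongDual ℝ E) :
    β (gibbsMean e α) = ∑ j, softmax (fun k ↦ α (e k)) j * β (e j) := by
  simp only [gibbsMean, map_sum, map_smul, smul_eq_mul]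

theorem gibbsMean_injective (he : affineSpan ℝ (range e) = ⊤) :
    Function.Injective (gibbsMean e) := by
  intro α β hαβ
  have hdiv : ∑ j, (softmax (fun k ↦ α (e k)) j - softmax (fun k ↦ β (e k)) j) *
      (α (e j) - β (e j)) = 0 := by
    simp_rw [sub_mul, ← sub_apply, Finset.sum_sub_distrib, ← apply_gibbsMean,
      hαβ, sub_self]
  have hconst := sub_eq_logSumExp_sub_of_softmax_eq (softmax_eq_of_sum_sub_mul_sub_eq_zero hdiv)
  exact sub_eq_zero.mp (ContinuousLinearMap.coe_injective
    (linearMap_eq_zero_of_eq_const_of_affineSpan_eq_top he (forall_mem_range.mpr hconst)))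

theorem gibbsMean_mem_interior_convexHull (he : affineSpan ℝ (range e) = ⊤)
    (α : StrongDual ℝ E) : gibbsMean e α ∈ interior (convexHull ℝ (range e)) := by
  have : Nonempty ι :=
    range_nonempty_iff_nonempty.mp (AffineSubspace.nonempty_of_affineSpan_eq_top ℝ E E he)
  exact sum_smul_mem_interior_convexHull he (softmax_pos _) (sum_softmax _)

theorem hasFDerivAt_freeEnergy [Nonempty ι] (α : StrongDual ℝ E) :
    HasFDerivAt (freeEnergy e) (NormedSpace.inclusionInDoubleDual ℝ E (gibbsMean e α)) α := by
  have hexp (j : ι) : HasFDerivAt (fun β : StrongDual ℝ E ↦ Real.exp (β (e j)))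
      (Real.exp (α (e j)) • NormedSpace.inclusionInDoubleDual ℝ E (e j)) α :=
    (NormedSpace.inclusionInDoubleDual ℝ E (e j)).hasFDerivAt.exp
  refine ((HasFDerivAt.fun_sum fun j _ ↦ hexp j).log
    (sum_exp_pos fun j ↦ α (e j)).ne').congr_fderiv ?_
  simp only [gibbsMean, softmax, map_sum, map_smul, Finset.smul_sum, smul_smul, div_eq_inv_mul]

theorem apply_le_freeEnergy_of_mem_convexHull {x : E} (hx : x ∈ convexHull ℝ (range e))
    (α : StrongDual ℝ E) : α x ≤ freeEnergy e α :=
  convexHull_min (range_subset_iff.mpr fun j ↦ le_logSumExp (fun k ↦ α (e k)) j)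
    (convex_halfSpace_le α.isLinear _) hx

theorem exists_pos_mul_norm_le_freeEnergy_sub {y : E}
    (hy : y ∈ interior (convexHull ℝ (range e))) :
    ∃ r > 0, ∀ α : StrongDual ℝ E, r * ‖α‖ ≤ freeEnergy e α - α y := by
  obtain ⟨r, hr, hball⟩ := Metric.nhds_basis_closedBall.mem_iff.mp (mem_interior_iff_mem_nhds.mp hy)
  refine ⟨r, hr, fun α ↦ ?_⟩
  have hle (v : E) (hv : ‖v‖ ≤ r) : α v ≤ freeEnergy e α - α y := by
    have hmem : y + v ∈ convexHull ℝ (range e) := hball (by simpa using hv)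
    linarith [apply_le_freeEnergy_of_mem_convexHull hmem α, α.map_add y v]
  have habs (v : E) (hv : ‖v‖ ≤ r) : ‖α v‖ ≤ freeEnergy e α - α y :=
    abs_le'.mpr ⟨hle v hv, by simpa using hle (-v) (by simpa using hv)⟩
  have hnonneg : 0 ≤ freeEnergy e α - α y := by simpa using hle 0 (by simpa using hr.le)
  rw [mul_comm, ← le_div_iff₀ hr]
  exact α.opNorm_le_bound (div_nonneg hnonneg hr.le) <|
    LinearMap.bound_of_ball_bound' hr _ α.toLinearMap fun v hv ↦
      habs v (mem_closedBall_zero_iff.mp hv)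

theorem interior_convexHull_subset_range_gibbsMean [FiniteDimensional ℝ E] :
    interior (convexHull ℝ (range e)) ⊆ range (gibbsMean e) := by
  intro y hy
  have : Nonempty ι :=
    range_nonempty_iff_nonempty.mp (convexHull_nonempty_iff.mp ⟨y, interior_subset hy⟩)
  have hderiv (α : StrongDual ℝ E) : HasFDerivAt (fun β ↦ freeEnergy e β - β y)
      (NormedSpace.inclusionInDoubleDual ℝ E (gibbsMean e α - y)) α := by
    rw [map_sub]
    exact (hasFDerivAt_freeEnergy α).sub (NormedSpace.inclusionInDoubleDual ℝ E y).hasFDerivAt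
  have hcont : Continuous fun α : StrongDual ℝ E ↦ freeEnergy e α - α y :=
    continuous_iff_continuousAt.mpr fun α ↦ (hderiv α).continuousAt
  obtain ⟨r, hr, hgrowth⟩ := exists_pos_mul_norm_le_freeEnergy_sub hy
  obtain ⟨α, hmin⟩ := hcont.exists_forall_le
    (Filter.tendsto_atTop_mono hgrowth (tendsto_norm_cocompact_atTop.const_mul_atTop hr))
  have hcritical := IsLocalMin.hasFDerivAt_eq_zero (.of_forall hmin) (hderiv α)
  exact ⟨α, sub_eq_zero.mp
    (SeparatingDual.eq_zero_of_forall_dual_eq_zero (DFunLike.congr_fun hcritical))⟩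

theorem gradFreeEnergy_bijection_onto_interior_general (he : affineSpan ℝ (range e) = ⊤) :
    Function.Injective (gibbsMean e) ∧
      range (gibbsMean e) = interior (convexHull ℝ (range e)) := by
  have : FiniteDimensional ℝ E := finiteDimensional_of_affineSpan_range_eq_top he
  exact ⟨gibbsMean_injective he,
    (range_subset_iff.mpr (gibbsMean_mem_interior_convexHull he)).antisymm
      interior_convexHull_subset_range_gibbsMean⟩

end GibbsMean

theorem gradFreeEnergy_eq_gibbsMean_comp_dotProductEquiv {d D : ℕ} (e : Fin D → (Fin d → ℝ)) :
    gradFreeEnergy d D e =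
      gibbsMean e ∘ (dotProductEquiv ℝ (Fin d)).trans LinearMap.toContinuousLinearMap := by
  ext1 α
  simp [gradFreeEnergy, gibbsMean, softmax, dotProduct, Finset.smul_sum, smul_smul,
    div_eq_inv_mul, mul_comm]

/-- The gradient map `∇F : ℝ^d → ℝ^d` is injective and its range is exactly the interior
of the Newton polytope `N = convexHull {e_1, …, e_D}`; that is, `∇F` is a bijection from
`ℝ^d` onto the interior of `N`. -/
theorem gradFreeEnergy_bijection_onto_interior
    (d D : ℕ) (hd : 1 ≤ d) (hD : 1 ≤ D)
    (e : Fin D → (Fin d → ℝ))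
    (hspan : Submodule.span ℝ (Set.range e) = ⊤)
    (hsum : ∑ j, e j = 0) :
    Function.Injective (gradFreeEnergy d D e) ∧
    Set.range (gradFreeEnergy d D e) = interior (convexHull ℝ (Set.range e)) := by
  have : Nonempty (Fin D) := ⟨⟨0, hD⟩⟩
  obtain ⟨hinj, hrange⟩ := gradFreeEnergy_bijection_onto_interior_general
    (affineSpan_range_eq_top_of_sum_eq_zero hspan hsum)
  rw [gradFreeEnergy_eq_gibbsMean_comp_dotProductEquiv]
  exact ⟨hinj.comp (LinearEquiv.injective _),
    ((LinearEquiv.surjective _).range_comp _).trans hrange⟩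
end

section
/- The limiting gauge function of the Aztec cuboid solves the three-dimensional gauge PDE: let A, B, C > 0 satisfy 1/A = 1/B + 1/C, and define H(x,y,z) = A·log A − x·log x − (A−x)·log(A−x) − B·log B + y·log y + (B−y)·log(B−y) − C·log C + z·log z + (C−z)·log(C−z). Then at every point of (0,A) × (0,B) × (0,C), e^{H_x}·H_{xx}/(1+e^{H_x})² + e^{H_y}·H_{yy}/(1+e^{H_y})² + e^{H_z}·H_{zz}/(1+e^{H_z})² = 0, where subscripts denote partial derivatives. -/
/-- The limiting gauge function of the Aztec cuboid with aspect ratio `(A,B,C)`: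
`H(x,y,z) = A log A − x log x − (A−x) log(A−x) − B log B + y log y + (B−y) log(B−y)
  − C log C + z log z + (C−z) log(C−z)`. -/
noncomputable def cuboidGauge (A B C x y z : ℝ) : ℝ :=
  A * Real.log A - x * Real.log x - (A - x) * Real.log (A - x) -
    B * Real.log B + y * Real.log y + (B - y) * Real.log (B - y) -
    C * Real.log C + z * Real.log z + (C - z) * Real.log (C - z)

/-!
With `h = Real.binEntropy`, the gauge function is a sum of rescaled binary entropies,
`H(x,y,z) = A h(x/A) - B h(y/B) - C h(z/C)`. The factor `e^u / (1 + e^u)²` of the PDE is the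
derivative of the sigmoid function `σ`, so the PDE says that the divergence of `σ(∇H)` vanishes,
with `σ` applied componentwise. Since `h'(p) = log (1 - p) - log p` is the logit of `1 - p` and
`σ(-u) = 1 - σ(u)`, the components of `σ(∇H)` are the affine functions `1 - x/A`, `y/B` and `z/C`,
and the divergence is `-1/A + 1/B + 1/C = 0`.
-/

open Real Set

/-- The contribution of one coordinate to the gauge PDE of the body-centered cubic lattice: for a
function `f` of that coordinate with `f'` differentiable at `s`, this is the derivative of `σ ∘ f'`
at `s`, with `σ` the sigmoid, written out by the chain rule as in the PDE. -/
noncomputable def gaugeOperator (f : ℝ → ℝ) (s : ℝ) : ℝ :=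
  exp (deriv f s) * deriv (deriv f) s / (1 + exp (deriv f s)) ^ 2

lemma sigmoid_mul_one_sub_sigmoid (u : ℝ) :
    sigmoid u * (1 - sigmoid u) = exp u / (1 + exp u) ^ 2 := by
  rw [sigmoid_def, exp_neg]
  field

lemma gaugeOperator_eq_sigmoid (f : ℝ → ℝ) (s : ℝ) :
    gaugeOperator f s =
      sigmoid (deriv f s) * (1 - sigmoid (deriv f s)) * deriv (deriv f) s := by
  rw [gaugeOperator, sigmoid_mul_one_sub_sigmoid, mul_div_right_comm]

lemma gaugeOperator_add_const (f : ℝ → ℝ) (c s : ℝ) :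
    gaugeOperator (fun t => f t + c) s = gaugeOperator f s := by
  simp only [gaugeOperator, deriv_add_const']

lemma gaugeOperator_const_add (c : ℝ) (f : ℝ → ℝ) (s : ℝ) :
    gaugeOperator (fun t => c + f t) s = gaugeOperator f s := by
  simp only [gaugeOperator, deriv_const_add']

lemma gaugeOperator_neg (f : ℝ → ℝ) (s : ℝ) :
    gaugeOperator (fun t => -f t) s = -gaugeOperator f s := by
  simp only [gaugeOperator_eq_sigmoid, deriv.fun_neg', sigmoid_neg]
  ring

lemma deriv_comp_div (f : ℝ → ℝ) (L s : ℝ) :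
    deriv (fun t => f (t / L)) s = deriv f (s / L) / L := by
  simpa only [div_eq_inv_mul, smul_eq_mul] using deriv_comp_mul_left L⁻¹ f s

lemma gaugeOperator_mul_comp_div (f : ℝ → ℝ) {L : ℝ} (hL : L ≠ 0) (s : ℝ) :
    gaugeOperator (fun t => L * f (t / L)) s = gaugeOperator f (s / L) / L := by
  have hderiv : deriv (fun t => L * f (t / L)) = fun t => deriv f (t / L) := by
    funext t
    rw [deriv_const_mul_field, deriv_comp_div, mul_div_cancel₀ _ hL]
  simp only [gaugeOperator_eq_sigmoid, hderiv, deriv_comp_div, mul_div_assoc]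

lemma sigmoid_deriv_binEntropy {p : ℝ} (hp : p ∈ Ioo 0 1) :
    sigmoid (deriv binEntropy p) = 1 - p := by
  have hq : 0 < 1 - p := sub_pos.2 hp.2
  rw [deriv_binEntropy, sigmoid_def, neg_sub, exp_sub, exp_log hp.1, exp_log hq]
  field

lemma gaugeOperator_binEntropy {p : ℝ} (hp : p ∈ Ioo 0 1) :
    gaugeOperator binEntropy p = -1 := by
  have hp₀ : p ≠ 0 := hp.1.ne'
  have hq₀ : 1 - p ≠ 0 := (sub_pos.2 hp.2).ne'
  have hderiv2 : deriv (deriv binEntropy) p = -1 / (p * (1 - p)) := deriv2_binEntropy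
  rw [gaugeOperator_eq_sigmoid, sigmoid_deriv_binEntropy hp, hderiv2]
  field

lemma gaugeOperator_mul_binEntropy_div {L s : ℝ} (hs : s ∈ Ioo 0 L) :
    gaugeOperator (fun t => L * binEntropy (t / L)) s = -(1 / L) := by
  have hL : 0 < L := hs.1.trans hs.2
  have hsL : s / L ∈ Ioo 0 1 := ⟨div_pos hs.1 hL, (div_lt_one hL).2 hs.2⟩
  rw [gaugeOperator_mul_comp_div _ hL.ne', gaugeOperator_binEntropy hsL, neg_div]

lemma mul_binEntropy_div {L : ℝ} (hL : L ≠ 0) (s : ℝ) :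
    L * binEntropy (s / L) = L * log L - s * log s - (L - s) * log (L - s) := by
  have mul_log_div (t : ℝ) : t * log (t / L) = t * log t - t * log L := by
    obtain rfl | ht := eq_or_ne t 0
    · simp
    · rw [log_div ht hL, mul_sub]
  calc L * binEntropy (s / L)
      = L * -(s / L * log (s / L) + (L - s) / L * log ((L - s) / L)) := by
        rw [binEntropy, log_inv, log_inv, one_sub_div hL]
        ring
    _ = -(s * log (s / L) + (L - s) * log ((L - s) / L)) := by field
    _ = L * log L - s * log s - (L - s) * log (L - s) := by
        rw [mul_log_div, mul_log_div]
        ring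

lemma cuboidGauge_eq_binEntropy {A B C : ℝ} (hA : A ≠ 0) (hB : B ≠ 0) (hC : C ≠ 0) (x y z : ℝ) :
    cuboidGauge A B C x y z =
      A * binEntropy (x / A) - B * binEntropy (y / B) - C * binEntropy (z / C) := by
  rw [cuboidGauge, mul_binEntropy_div hA, mul_binEntropy_div hB, mul_binEntropy_div hC]
  ring

/-- The limiting gauge function of the Aztec cuboid solves the three-dimensional gauge
PDE: if `A, B, C > 0` satisfy `1/A = 1/B + 1/C`, then at every point of
`(0,A) × (0,B) × (0,C)`,
`e^{H_x}H_{xx}/(1+e^{H_x})² + e^{H_y}H_{yy}/(1+e^{H_y})² + e^{H_z}H_{zz}/(1+e^{H_z})² = 0`,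
where subscripts denote partial derivatives. -/
theorem cuboid_gauge_solves_gauge_PDE
    (A B C : ℝ) (hA : 0 < A) (hB : 0 < B) (hC : 0 < C)
    (hABC : 1 / A = 1 / B + 1 / C)
    (x y z : ℝ) (hx : x ∈ Set.Ioo 0 A) (hy : y ∈ Set.Ioo 0 B) (hz : z ∈ Set.Ioo 0 C) :
    Real.exp (deriv (fun s => cuboidGauge A B C s y z) x) *
        deriv (deriv (fun s => cuboidGauge A B C s y z)) x /
        (1 + Real.exp (deriv (fun s => cuboidGauge A B C s y z) x)) ^ 2 +
      Real.exp (deriv (fun t => cuboidGauge A B C x t z) y) *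
        deriv (deriv (fun t => cuboidGauge A B C x t z)) y /
        (1 + Real.exp (deriv (fun t => cuboidGauge A B C x t z) y)) ^ 2 +
      Real.exp (deriv (fun r => cuboidGauge A B C x y r) z) *
        deriv (deriv (fun r => cuboidGauge A B C x y r)) z /
        (1 + Real.exp (deriv (fun r => cuboidGauge A B C x y r) z)) ^ 2 = 0 := by
  have hH := cuboidGauge_eq_binEntropy hA.ne' hB.ne' hC.ne'
  change gaugeOperator (fun s => cuboidGauge A B C s y z) x +
    gaugeOperator (fun t => cuboidGauge A B C x t z) y +
    gaugeOperator (fun r => cuboidGauge A B C x y r) z = 0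
  have hHx : gaugeOperator (fun s => cuboidGauge A B C s y z) x = -(1 / A) := by
    simp only [hH, sub_eq_add_neg, gaugeOperator_add_const, gaugeOperator_mul_binEntropy_div hx]
  have hHy : gaugeOperator (fun t => cuboidGauge A B C x t z) y = 1 / B := by
    simp only [hH, sub_eq_add_neg, gaugeOperator_add_const, gaugeOperator_const_add,
      gaugeOperator_neg, gaugeOperator_mul_binEntropy_div hy, neg_neg]
  have hHz : gaugeOperator (fun r => cuboidGauge A B C x y r) z = 1 / C := by
    simp only [hH, sub_eq_add_neg, gaugeOperator_const_add, gaugeOperator_neg,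
      gaugeOperator_mul_binEntropy_div hz, neg_neg]
  rw [hHx, hHy, hHz, hABC]
  ring
end
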